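/- arXiv:0901.3304 — 6 statements merged into one kernel-verified Lean document; each statement's English description precedes it below -/
import Mathlib

section
/- Let x ∈ [−1,1] and U_1, U_2, U_3, U_4 ∈ [0, t], and define y_1 = (x − 1/2 − a/2 + b + U_1 − U_4)/a, y_2 = (x + U_2 − U_4)/a, y_3 = (x + 1/2 + a/2 − b + U_2 − U_3)/a, y_4 = (x + U_1 − U_3)/a. Then for each i ∈ {1,2,3,4} such that y_i ∈ [−1,1], there exists k ∈ {1,2,3} with ℓ_{2k}(x) ≤ y_i ≤ ℓ_{2k−1}(x). -/
/-- The six lines `ℓ_1, …, ℓ_6` bounding the three slanted stripes. -/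
noncomputable def larssonLine (a b : ℝ) : ℕ → ℝ → ℝ
  | 1 => fun x => x / a + (1 - a - 2 * b) / a
  | 2 => fun x => x / a + 2
  | 3 => fun x => x / a + (1 - 3 * a - 2 * b) / (2 * a)
  | 4 => fun x => x / a - (1 - 3 * a - 2 * b) / (2 * a)
  | 5 => fun x => x / a - 2
  | 6 => fun x => x / a - (1 - a - 2 * b) / a
  | _ => fun _ => 0

/-- Each of the four candidate types `y_1, …, y_4` lying in `[−1,1]` belongs to one of the
three slanted stripes: there is `k ∈ {1,2,3}` with `ℓ_{2k}(x) ≤ y_i ≤ ℓ_{2k−1}(x)`. -/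
theorem types_lie_in_stripes
    (a b : ℝ) (ha : 1 / 4 < a) (hb : 0 < b) (hab : 3 * a + 2 * b < 1)
    (x : ℝ) (hx : x ∈ Set.Icc (-1 : ℝ) 1)
    (U₁ U₂ U₃ U₄ : ℝ)
    (hU₁ : U₁ ∈ Set.Icc (0 : ℝ) ((1 - 3 * a - 2 * b) / 2))
    (hU₂ : U₂ ∈ Set.Icc (0 : ℝ) ((1 - 3 * a - 2 * b) / 2))
    (hU₃ : U₃ ∈ Set.Icc (0 : ℝ) ((1 - 3 * a - 2 * b) / 2))
    (hU₄ : U₄ ∈ Set.Icc (0 : ℝ) ((1 - 3 * a - 2 * b) / 2)) :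
    ∀ y ∈ ({(x - 1 / 2 - a / 2 + b + U₁ - U₄) / a,
            (x + U₂ - U₄) / a,
            (x + 1 / 2 + a / 2 - b + U₂ - U₃) / a,
            (x + U₁ - U₃) / a} : Set ℝ),
      y ∈ Set.Icc (-1 : ℝ) 1 →
        ∃ k : ℕ, k ∈ ({1, 2, 3} : Set ℕ) ∧
          larssonLine a b (2 * k) x ≤ y ∧ y ≤ larssonLine a b (2 * k - 1) x := by
  have h0 : 0 < a := by linarith
  obtain ⟨p1, q1⟩ := hU₁
  obtain ⟨p2, q2⟩ := hU₂
  obtain ⟨p3, q3⟩ := hU₃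
  obtain ⟨p4, q4⟩ := hU₄
  have E1 : x / a + (1 - a - 2 * b) / a = (x + (1 - a - 2 * b)) / a := by field_simp
  have E2 : x / a + 2 = (x + 2 * a) / a := by field_simp
  have E3 : x / a + (1 - 3 * a - 2 * b) / (2 * a) = (x + (1 - 3 * a - 2 * b) / 2) / a := by field_simp
  have E4 : x / a - (1 - 3 * a - 2 * b) / (2 * a) = (x - (1 - 3 * a - 2 * b) / 2) / a := by field_simp
  have E5 : x / a - 2 = (x - 2 * a) / a := by field_simp
  have E6 : x / a - (1 - a - 2 * b) / a = (x - (1 - a - 2 * b)) / a := by field_simp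
  rintro y (rfl | rfl | rfl | rfl) -
  · refine ⟨3, by simp, ?_, ?_⟩
    · show x / a - (1 - a - 2 * b) / a ≤ _
      rw [E6, div_le_div_iff_of_pos_right h0]; linarith
    · show _ ≤ x / a - 2
      rw [E5, div_le_div_iff_of_pos_right h0]; linarith
  · refine ⟨2, by simp, ?_, ?_⟩
    · show x / a - (1 - 3 * a - 2 * b) / (2 * a) ≤ _
      rw [E4, div_le_div_iff_of_pos_right h0]; linarith
    · show _ ≤ x / a + (1 - 3 * a - 2 * b) / (2 * a)
      rw [E3, div_le_div_iff_of_pos_right h0]; linarith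
  · refine ⟨1, by simp, ?_, ?_⟩
    · show x / a + 2 ≤ _
      rw [E2, div_le_div_iff_of_pos_right h0]; linarith
    · show _ ≤ x / a + (1 - a - 2 * b) / a
      rw [E1, div_le_div_iff_of_pos_right h0]; linarith
  · refine ⟨2, by simp, ?_, ?_⟩
    · show x / a - (1 - 3 * a - 2 * b) / (2 * a) ≤ _
      rw [E4, div_le_div_iff_of_pos_right h0]; linarith
    · show _ ≤ x / a + (1 - 3 * a - 2 * b) / (2 * a)
      rw [E3, div_le_div_iff_of_pos_right h0]; linarith
end

section
/- For every x ∈ [−1,1] with |x| > 1 − 2b, all U_1, U_2, U_3, U_4 ∈ [0, t] and every i ∈ {1,2,3,4}, one has |(v_i − u_i) − x| > a; equivalently, the line e(x) = {(s, s + x) : s ∈ ℝ} is disjoint from each of the four level-one squares Q_i. -/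
/-- For `x ∈ [−1,1]` with `|x| > 1 − 2b`, the line `e(x) = {(s, s+x)}` misses all four
level-one squares: `|(v_i − u_i) − x| > a` for each `i`, equivalently `e(x) ∩ Q_i = ∅`. -/
theorem line_misses_level_one_squares
    (a b : ℝ) (ha : 1 / 4 < a) (hb : 0 < b) (hab : 3 * a + 2 * b < 1)
    (x : ℝ) (hx : x ∈ Set.Icc (-1 : ℝ) 1) (hx' : 1 - 2 * b < |x|)
    (U₁ U₂ U₃ U₄ : ℝ)
    (hU₁ : U₁ ∈ Set.Icc (0 : ℝ) ((1 - 3 * a - 2 * b) / 2))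
    (hU₂ : U₂ ∈ Set.Icc (0 : ℝ) ((1 - 3 * a - 2 * b) / 2))
    (hU₃ : U₃ ∈ Set.Icc (0 : ℝ) ((1 - 3 * a - 2 * b) / 2))
    (hU₄ : U₄ ∈ Set.Icc (0 : ℝ) ((1 - 3 * a - 2 * b) / 2))
    (u v : Fin 4 → ℝ)
    (hu : u = ![b + U₁, 1 / 2 + a / 2 + U₂, 1 / 2 + a / 2 + U₂, b + U₁])
    (hv : v = ![1 / 2 + a / 2 + U₄, 1 / 2 + a / 2 + U₄, b + U₃, b + U₃]) :
    ∀ i : Fin 4, a < |(v i - u i) - x| ∧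
      ∀ s : ℝ, (s, s + x) ∉ Set.Icc (u i) (u i + a) ×ˢ Set.Icc (v i) (v i + a) := by
  obtain ⟨h1, h1'⟩ := hU₁
  obtain ⟨h2, h2'⟩ := hU₂
  obtain ⟨h3, h3'⟩ := hU₃
  obtain ⟨h4, h4'⟩ := hU₄
  have key : ∀ i : Fin 4, a < |(v i - u i) - x| := by
    intro i
    rw [lt_abs] at hx' ⊢
    subst hu hv
    rcases hx' with h | h
    · right
      fin_cases i <;> simp <;> linarith
    · left
      fin_cases i <;> simp <;> linarith
  intro i
  refine ⟨key i, ?_⟩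
  rintro s ⟨⟨p, q⟩, ⟨r, w⟩⟩
  simp only at p q r w
  have hk := key i
  rw [lt_abs] at hk
  rcases hk with h | h <;> linarith
end

section
/- Let ℓ_1(x) = (x + 1 − a − 2b)/a and c = 2b/(1−a). Then ℓ_1(x) − x = ((1−a)/a)·(x − (−1 + c)) for all x ∈ ℝ, so −1 + c is the unique fixed point of ℓ_1; moreover, for every x_0 ∈ [−1, −1 + c) and every sequence (x_k)_{k≥0} of reals with x_{k+1} ≤ ℓ_1(x_k) for all k ≥ 0, there exists n with x_n < −1. -/
/-- With `ℓ₁(x) = (x + 1 − a − 2b)/a` and `c = 2b/(1−a)`: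
`ℓ₁(x) − x = ((1−a)/a)·(x − (−1+c))` for all `x`, so `−1+c` is the unique fixed point of
`ℓ₁`; moreover for every `x₀ ∈ [−1, −1+c)` and every sequence with `x_{k+1} ≤ ℓ₁(x_k)`,
some `x_n < −1`. -/
theorem ell_one_fixed_point_and_escape
    (a b : ℝ) (ha : 1 / 4 < a) (hb : 0 < b) (hab : 3 * a + 2 * b < 1)
    (c : ℝ) (hc : c = 2 * b / (1 - a)) :
    (∀ x : ℝ, (x + 1 - a - 2 * b) / a - x = ((1 - a) / a) * (x - (-1 + c))) ∧
    (∀ x : ℝ, (x + 1 - a - 2 * b) / a = x ↔ x = -1 + c) ∧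
    (∀ x₀ ∈ Set.Ico (-1 : ℝ) (-1 + c), ∀ X : ℕ → ℝ, X 0 = x₀ →
      (∀ k : ℕ, X (k + 1) ≤ (X k + 1 - a - 2 * b) / a) → ∃ n : ℕ, X n < -1) := by
  have ha0 : 0 < a := by linarith
  have h1a : 0 < 1 - a := by linarith
  have hr : 0 < (1 - a) / a := div_pos h1a ha0
  have key : ∀ x : ℝ, (x + 1 - a - 2 * b) / a - x = ((1 - a) / a) * (x - (-1 + c)) := by
    intro x
    have hcm : (1 - a) * c = 2 * b := by rw [hc]; field_simp
    rw [div_sub' ha0.ne', div_mul_eq_mul_div]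
    congr 1
    linear_combination hcm
  refine ⟨key, ?_, ?_⟩
  · intro x
    rw [← sub_eq_zero, key, mul_eq_zero, sub_eq_zero]
    exact ⟨fun h => h.resolve_left hr.ne', Or.inr⟩
  · rintro x₀ ⟨_, hx⟩ X h0 hX
    have hd : 0 < (1 - a) / a * (-1 + c - x₀) := mul_pos hr (by linarith)
    have hind : ∀ n : ℕ, X n ≤ x₀ - n * ((1 - a) / a * (-1 + c - x₀)) := by
      intro n
      induction n with
      | zero => simp [h0]
      | succ k ih =>
        have h1 := hX k
        have h2 := key (X k)
        have h3 : X k ≤ x₀ := by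
          have : 0 ≤ (k : ℝ) * ((1 - a) / a * (-1 + c - x₀)) := by positivity
          linarith
        have h4 := mul_le_mul_of_nonneg_left h3 hr.le
        push_cast
        linarith
    obtain ⟨n, hn⟩ := exists_nat_gt ((x₀ + 1) / ((1 - a) / a * (-1 + c - x₀)))
    rw [div_lt_iff₀ hd] at hn
    exact ⟨n, by linarith [hind n]⟩
end

section
/- Assume in addition 1 − 4a − 2b + 3a² − 6ab > 0 (equivalently c < (1−3a−2b)/(4a)), let ε satisfy 0 < ε < (1−3a−2b)/(4a) − c, and put T = [−1 + c + ε, 1 − c − ε]. Then there exists κ > 0 such that for every x ∈ T the set E_1(x) = {y : m_T(x, y) > 0} contains an interval of length κ. -/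
open MeasureTheory

/-- The triangular density: `f_t(z) = (t − |z|)/t²` for `|z| ≤ t` and `0` otherwise. -/
noncomputable def triangularDensity (t z : ℝ) : ℝ :=
  if |z| ≤ t then (t - |z|) / t ^ 2 else 0

/-- The kernel `m_T(x,y)` of the branching process, with `t = (1−3a−2b)/2`:
`m_T(x,y) = [a f_t(ay + 1/2 + a/2 − b − x) + 2a f_t(ay − x) + a f_t(ay − 1/2 − a/2 + b − x)]·1_T(y)`. -/
noncomputable def larssonKernel (a b : ℝ) (T : Set ℝ) (x y : ℝ) : ℝ :=
  (a * triangularDensity ((1 - 3 * a - 2 * b) / 2) (a * y + 1 / 2 + a / 2 - b - x) +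
      2 * a * triangularDensity ((1 - 3 * a - 2 * b) / 2) (a * y - x) +
      a * triangularDensity ((1 - 3 * a - 2 * b) / 2) (a * y - 1 / 2 - a / 2 + b - x)) *
    Set.indicator T (fun _ => (1 : ℝ)) y

/-- The iterated kernels, with the index shifted by one:
`larssonKernelIter a b T n = m_T^{(n+1)}`, i.e. `larssonKernelIter a b T 0 = m_T^{(1)} = m_T`
and `m_T^{(n+1)}(x,y) = ∫_T m_T^{(n)}(x,z) m_T(z,y) dz`. -/
noncomputable def larssonKernelIter (a b : ℝ) (T : Set ℝ) : ℕ → ℝ → ℝ → ℝ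
  | 0 => larssonKernel a b T
  | (n + 1) => fun x y => ∫ z in T, larssonKernelIter a b T n x z * larssonKernel a b T z y

theorem tri_nonneg (t z : ℝ) : 0 ≤ triangularDensity t z := by
  unfold triangularDensity
  split_ifs with h
  · have : 0 ≤ t - |z| := by linarith
    positivity
  · exact le_rfl

theorem tri_pos (t z : ℝ) (h : |z| < t) : 0 < triangularDensity t z := by
  unfold triangularDensity
  rw [if_pos h.le]
  have h1 : 0 < t - |z| := by linarith
  have h2 : 0 < t := lt_of_le_of_lt (abs_nonneg z) h
  positivity

theorem interval_aux (a r t δ v : ℝ) (ha : 0 < a) (ha' : a < 1 / 3) (hr : δ ≤ r) (ht : δ ≤ t)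
    (hδ : 0 < δ) (hv : |v| ≤ a * r + t - δ) :
    ∃ u : ℝ, ∀ y ∈ Set.Ioo u (u + 2 * δ), |a * y - v| < t ∧ y ∈ Set.Icc (-r) r := by
  have hD : 0 < a * r + t - δ := by nlinarith
  set D := a * r + t - δ with hDd
  have hq1 : |v / D| ≤ 1 := by
    rw [abs_div, abs_of_pos hD]
    exact (div_le_one hD).2 hv
  obtain ⟨q, hq⟩ : ∃ q, q = v / D := ⟨_, rfl⟩
  have hvq : v = q * D := by rw [hq]; field_simp
  rw [← hq] at hq1
  obtain ⟨hl, hu⟩ := abs_le.1 hq1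
  refine ⟨q * (r - δ) - δ, fun y hy => ?_⟩
  obtain ⟨h1, h2⟩ := hy
  have e1 : q * (r - δ) ≤ r - δ := by nlinarith
  have e2 : -(r - δ) ≤ q * (r - δ) := by nlinarith
  have hm : 0 ≤ t - δ + a * δ := by nlinarith
  have f1 : q * (t - δ + a * δ) ≤ t - δ + a * δ := by nlinarith
  have f2 : -(t - δ + a * δ) ≤ q * (t - δ + a * δ) := by nlinarith
  have g1 : a * (y - q * (r - δ)) < a * δ := by
    apply mul_lt_mul_of_pos_left _ ha; linarith
  have g2 : a * (-δ) < a * (y - q * (r - δ)) := by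
    apply mul_lt_mul_of_pos_left _ ha; linarith
  have key : a * y - v = a * (y - q * (r - δ)) - q * (t - δ + a * δ) := by
    rw [hvq, hDd]; ring
  have haδ : a * δ < 1 / 3 * δ := mul_lt_mul_of_pos_right ha' hδ
  refine ⟨?_, ?_, ?_⟩
  · rw [key, abs_lt]
    constructor <;> linarith
  · linarith
  · linarith

/-- In the simple case `1 − 4a − 2b + 3a² − 6ab > 0`, with
`T = [−1 + c + ε, 1 − c − ε]`, there is `κ > 0` such that for every `x ∈ T` the set
`E₁(x) = {y : m_T(x,y) > 0}` contains an interval of length `κ`. -/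
theorem kernel_support_contains_interval_simple_case
    (a b : ℝ) (ha : 1 / 4 < a) (hb : 0 < b) (hab : 3 * a + 2 * b < 1)
    (c : ℝ) (hc : c = 2 * b / (1 - a))
    (hsimple : 0 < 1 - 4 * a - 2 * b + 3 * a ^ 2 - 6 * a * b)
    (ε : ℝ) (hε : 0 < ε) (hε' : ε < (1 - 3 * a - 2 * b) / (4 * a) - c)
    (T : Set ℝ) (hT : T = Set.Icc (-1 + c + ε) (1 - c - ε)) :
    ∃ κ > (0 : ℝ), ∀ x ∈ T, ∃ u : ℝ,
      Set.Ioo u (u + κ) ⊆ {y : ℝ | 0 < larssonKernel a b T x y} := by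
  obtain ⟨r, hr⟩ : ∃ r, r = 1 - c - ε := ⟨_, rfl⟩
  obtain ⟨t, ht⟩ : ∃ t, t = (1 - 3 * a - 2 * b) / 2 := ⟨_, rfl⟩
  obtain ⟨s, hs⟩ : ∃ s, s = 1 / 2 + a / 2 - b := ⟨_, rfl⟩
  have ha0 : 0 < a := by linarith
  have ha3 : a < 1 / 3 := by linarith
  have hT' : T = Set.Icc (-r) r := by
    rw [hT, hr]; congr 1; ring
  have hc' : c * (1 - a) = 2 * b := by
    rw [hc]; exact div_mul_cancel₀ _ (by linarith)
  have h4 : (ε + c) * (4 * a) < 1 - 3 * a - 2 * b := by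
    rw [← lt_div_iff₀ (by linarith)]; linarith
  have hra : 4 * (a * r) > 7 * a + 2 * b - 1 := by rw [hr]; linarith
  have hr0 : 0 < r := by
    by_contra hh
    nlinarith
  have ht0 : 0 < t := by linarith
  have h5 : 0 < a * r + t - s / 2 := by linarith
  have h6 : 0 < s + a * r + t - r := by
    have : 0 < ε * (1 - a) := mul_pos hε (by linarith)
    rw [hs, ht, hr]; linarith
  obtain ⟨δ, hδ, d1, d2, d3, d4⟩ : ∃ δ > 0, δ ≤ r ∧ δ ≤ t ∧ δ ≤ a * r + t - s / 2 ∧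
      δ ≤ s + a * r + t - r :=
    ⟨min (min r t) (min (a * r + t - s / 2) (s + a * r + t - r)),
      lt_min (lt_min hr0 ht0) (lt_min h5 h6), by simp, by simp, by simp, by simp⟩
  refine ⟨2 * δ, by linarith, fun x hx => ?_⟩
  rw [hT'] at hx
  obtain ⟨x1, x2⟩ := hx
  have hk : ∀ v, (v = x - s ∨ v = x ∨ v = x + s) → |v| ≤ a * r + t - δ → ∃ u : ℝ,
      Set.Ioo u (u + 2 * δ) ⊆ {y : ℝ | 0 < larssonKernel a b T x y} := by
    intro v hv hv'
    obtain ⟨u, hu⟩ := interval_aux a r t δ v ha0 ha3 d1 d2 hδ hv'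
    refine ⟨u, fun y hy => ?_⟩
    obtain ⟨y1, y2⟩ := hu y hy
    have hp := tri_pos t _ y1
    show 0 < larssonKernel a b T x y
    unfold larssonKernel
    rw [hT', Set.indicator_of_mem y2, mul_one, ← ht]
    have n1 := mul_nonneg ha0.le (tri_nonneg t (a * y + 1 / 2 + a / 2 - b - x))
    have n2 := mul_nonneg ha0.le (tri_nonneg t (a * y - x))
    have n3 := mul_nonneg ha0.le (tri_nonneg t (a * y - 1 / 2 - a / 2 + b - x))
    have hp' := mul_pos ha0 hp
    rcases hv with h | h | h
    · rw [show a * y - v = a * y + 1 / 2 + a / 2 - b - x by rw [h, hs]; ring] at hp'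
      linarith
    · rw [h] at hp'
      linarith
    · rw [show a * y - v = a * y - 1 / 2 - a / 2 + b - x by rw [h, hs]; ring] at hp'
      linarith
  by_cases c1 : s / 2 < x
  · exact hk (x - s) (by simp) (abs_le.2 ⟨by linarith, by linarith⟩)
  by_cases c2 : x < -(s / 2)
  · exact hk (x + s) (by simp) (abs_le.2 ⟨by linarith, by linarith⟩)
  · exact hk x (by simp) (abs_le.2 ⟨by linarith, by linarith⟩)
end

section
/- Let T(0) = [−1 + c, 1 − c]. Then for every y ∈ T(0), ∫_{−1+c}^{1−c} m_{T(0)}(x, y) dx = 4a; that is, the constant function 1 on T(0) is an eigenfunction with eigenvalue 4a of the operator h ↦ ∫_{T(0)} h(x)·m_{T(0)}(x, ·) dx. -/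
open MeasureTheory

theorem tri_eq (t : ℝ) (z : ℝ) :
    triangularDensity t z = max 0 (t - |z|) / t ^ 2 := by
  unfold triangularDensity
  split_ifs with h
  · rw [max_eq_right (by linarith)]
  · rw [max_eq_left (by linarith)]; simp

theorem tri_cont (t p : ℝ) : Continuous (fun x => triangularDensity t (p - x)) := by
  simp only [tri_eq]
  fun_prop

theorem tri_int (t p L R : ℝ) (ht : 0 < t) (hL : L ≤ p - t) (hR : p + t ≤ R) :
    ∫ x in Set.Icc L R, triangularDensity t (p - x) = 1 := by
  have hsub : Set.Icc (p - t) (p + t) ⊆ Set.Icc L R := Set.Icc_subset_Icc hL hR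
  rw [setIntegral_eq_of_subset_of_forall_sdiff_eq_zero measurableSet_Icc hsub]
  · rw [integral_Icc_eq_integral_Ioc, ← intervalIntegral.integral_of_le (by linarith),
      ← intervalIntegral.integral_add_adjacent_intervals (b := p)
        ((tri_cont t p).intervalIntegrable _ _) ((tri_cont t p).intervalIntegrable _ _)]
    have h1 : ∫ x in (p - t)..p, triangularDensity t (p - x) = 1 / 2 := by
      rw [intervalIntegral.integral_eq_sub_of_hasDerivAt
        (f := fun x => (t - (p - x)) ^ 2 / 2 / t ^ 2) _
        ((tri_cont t p).intervalIntegrable _ _)]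
      · field_simp; ring
      · intro x hx
        rw [Set.uIcc_of_le (by linarith)] at hx
        rw [tri_eq, abs_of_nonneg (by linarith [hx.2]), max_eq_right (by linarith [hx.1])]
        have := ((((((hasDerivAt_id x).const_sub p).const_sub t).pow 2).div_const 2).div_const (t ^ 2))
        refine HasDerivAt.congr_deriv this ?_
        simp only [id, Nat.cast_ofNat]
        ring
    have h2 : ∫ x in p..(p + t), triangularDensity t (p - x) = 1 / 2 := by
      rw [intervalIntegral.integral_eq_sub_of_hasDerivAt
        (f := fun x => - ((t + (p - x)) ^ 2 / 2 / t ^ 2)) _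
        ((tri_cont t p).intervalIntegrable _ _)]
      · field_simp; ring
      · intro x hx
        rw [Set.uIcc_of_le (by linarith)] at hx
        rw [tri_eq, abs_of_nonpos (by linarith [hx.1]), max_eq_right (by linarith [hx.2])]
        have := ((((((hasDerivAt_id x).const_sub p).const_add t).pow 2).div_const 2).div_const (t ^ 2)).neg
        refine HasDerivAt.congr_deriv this ?_
        simp only [id, Nat.cast_ofNat]
        ring
    rw [h1, h2]; norm_num
  · intro x hx
    rw [tri_eq, max_eq_left, zero_div]
    by_contra h
    push Not at h
    have := abs_lt.1 (show |p - x| < t by linarith)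
    exact hx.2 ⟨by linarith [this.2], by linarith [this.1]⟩

/-- With `T(0) = [−1 + c, 1 − c]`, for every `y ∈ T(0)` one has
`∫_{−1+c}^{1−c} m_{T(0)}(x, y) dx = 4a`: the constant function `1` on `T(0)` is an
eigenfunction with eigenvalue `4a` of `h ↦ ∫_{T(0)} h(x) m_{T(0)}(x, ·) dx`. -/
theorem kernel_left_eigenfunction_constant
    (a b : ℝ) (ha : 1 / 4 < a) (hb : 0 < b) (hab : 3 * a + 2 * b < 1)
    (c : ℝ) (hc : c = 2 * b / (1 - a)) :
    ∀ y ∈ Set.Icc (-1 + c) (1 - c),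
      (∫ x in Set.Icc (-1 + c) (1 - c),
          larssonKernel a b (Set.Icc (-1 + c) (1 - c)) x y) = 4 * a := by
  intro y hy
  have h1a : 0 < 1 - a := by linarith
  have hc' : c * (1 - a) = 2 * b := by rw [hc]; field_simp
  have hc0 : 0 < c := by rw [hc]; positivity
  have hc1 : c < 1 := by rw [hc, div_lt_one h1a]; linarith
  have hy1 : a * y ≤ a * (1 - c) := mul_le_mul_of_nonneg_left hy.2 (by linarith)
  have hy2 : a * (-1 + c) ≤ a * y := mul_le_mul_of_nonneg_left hy.1 (by linarith)
  have hac : 0 < a * c := by positivity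
  have hac' : a * c < a := by nlinarith
  have ht : 0 < (1 - 3 * a - 2 * b) / 2 := by linarith
  simp only [larssonKernel, Set.indicator_of_mem hy, mul_one]
  have hI : ∀ k p : ℝ, IntegrableOn
      (fun x => k * triangularDensity ((1 - 3 * a - 2 * b) / 2) (p - x))
      (Set.Icc (-1 + c) (1 - c)) := fun k p =>
    ((tri_cont _ p).const_mul k).continuousOn.integrableOn_Icc
  have hI2 : ∀ k p k' p' : ℝ, IntegrableOn
      (fun x => k * triangularDensity ((1 - 3 * a - 2 * b) / 2) (p - x) +
        k' * triangularDensity ((1 - 3 * a - 2 * b) / 2) (p' - x))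
      (Set.Icc (-1 + c) (1 - c)) := fun k p k' p' => (hI k p).add (hI k' p')
  rw [integral_add (hI2 _ _ _ _) (hI _ _), integral_add (hI _ _) (hI _ _),
    integral_const_mul, integral_const_mul, integral_const_mul,
    tri_int _ _ _ _ ht, tri_int _ _ _ _ ht, tri_int _ _ _ _ ht]
  · ring
  all_goals nlinarith
end

section
/- There exist l ∈ ℕ and a closed set T ⊂ (−1 + c, 1 − c) which is the union of 3^l pairwise disjoint closed intervals of equal length, with 0 contained in the interior of T, together with a constant κ > 0 such that for every x ∈ T the set {y : m_T(x, y) > 0} contains an interval of length κ, and moreover an n ∈ ℕ such that m_T^{(n)}(x, y) > 0 for all x, y ∈ T. -/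
open MeasureTheory

namespace LK

lemma tri_nonneg {t : ℝ} (z : ℝ) : 0 ≤ triangularDensity t z := by
  unfold triangularDensity
  split_ifs with h
  · exact div_nonneg (by linarith) (sq_nonneg t)
  · exact le_rfl

lemma tri_pos {t z : ℝ} (h : |z| < t) : 0 < triangularDensity t z := by
  unfold triangularDensity
  rw [if_pos h.le]
  have : 0 ≤ |z| := abs_nonneg z
  have ht : 0 < t := by linarith
  exact div_pos (by linarith) (by positivity)

lemma tri_le {t : ℝ} (ht : 0 < t) (z : ℝ) : triangularDensity t z ≤ t / t ^ 2 := by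
  unfold triangularDensity
  split_ifs with h
  · gcongr
    linarith [abs_nonneg z]
  · positivity

lemma tri_meas (t : ℝ) : Measurable (triangularDensity t) := by
  unfold triangularDensity
  refine Measurable.ite ?_ (by fun_prop) measurable_const
  exact measurableSet_le (by fun_prop) measurable_const

lemma ker_nonneg {a b : ℝ} (ha : 0 < a) (T : Set ℝ) (x y : ℝ) : 0 ≤ larssonKernel a b T x y := by
  unfold larssonKernel
  refine mul_nonneg ?_ (Set.indicator_nonneg (fun _ _ => zero_le_one) _)
  have h1 := fun z => tri_nonneg (t := (1 - 3 * a - 2 * b) / 2) z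
  have := mul_nonneg ha.le (h1 (a * y + 1 / 2 + a / 2 - b - x))
  have := mul_nonneg (by linarith : 0 ≤ 2 * a) (h1 (a * y - x))
  have := mul_nonneg ha.le (h1 (a * y - 1 / 2 - a / 2 + b - x))
  linarith

lemma ker_le {a b : ℝ} (ha : 0 < a) (ht : 0 < (1 - 3 * a - 2 * b) / 2) (T : Set ℝ) :
    ∃ M : ℝ, 0 ≤ M ∧ ∀ x y, larssonKernel a b T x y ≤ M := by
  set t := (1 - 3 * a - 2 * b) / 2 with htd
  refine ⟨4 * a * (t / t ^ 2), by positivity, fun x y => ?_⟩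
  unfold larssonKernel
  rw [← htd]
  have h1 := fun z => tri_le ht z
  have h0 := fun z => tri_nonneg (t := t) z
  have e1 := mul_le_mul_of_nonneg_left (h1 (a * y + 1 / 2 + a / 2 - b - x)) ha.le
  have e2 := mul_le_mul_of_nonneg_left (h1 (a * y - x)) (by linarith : 0 ≤ 2 * a)
  have e3 := mul_le_mul_of_nonneg_left (h1 (a * y - 1 / 2 - a / 2 + b - x)) ha.le
  have hp : 0 ≤ 4 * a * (t / t ^ 2) := by positivity
  by_cases hy : y ∈ T
  · rw [Set.indicator_of_mem hy]
    linarith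
  · rw [Set.indicator_of_notMem hy]
    simpa using hp

lemma ker_meas (a b : ℝ) {T : Set ℝ} (hT : MeasurableSet T) :
    Measurable (fun p : ℝ × ℝ => larssonKernel a b T p.1 p.2) := by
  unfold larssonKernel
  have h := tri_meas ((1 - 3 * a - 2 * b) / 2)
  have hi : Measurable (fun p : ℝ × ℝ => Set.indicator T (fun _ => (1 : ℝ)) p.2) :=
    (measurable_const.indicator hT).comp measurable_snd
  refine Measurable.mul (Measurable.add (Measurable.add ?_ ?_) ?_) hi
  · exact (h.comp (by fun_prop)).const_mul _
  · exact (h.comp (by fun_prop)).const_mul _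
  · exact (h.comp (by fun_prop)).const_mul _

lemma ker_meas_right (a b : ℝ) {T : Set ℝ} (hT : MeasurableSet T) (x : ℝ) :
    Measurable (fun y => larssonKernel a b T x y) := by
  have h : Measurable (Function.uncurry (larssonKernel a b T)) := ker_meas a b hT
  exact h.of_uncurry_left

lemma ker_meas_left (a b : ℝ) {T : Set ℝ} (hT : MeasurableSet T) (y : ℝ) :
    Measurable (fun x => larssonKernel a b T x y) := by
  have h : Measurable (Function.uncurry (larssonKernel a b T)) := ker_meas a b hT
  exact h.of_uncurry_right

lemma ker_meas_swap (a b : ℝ) {T : Set ℝ} (hT : MeasurableSet T) :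
    Measurable (fun p : ℝ × ℝ => larssonKernel a b T p.2 p.1) := by
  have h : Measurable (Function.uncurry (larssonKernel a b T)) := ker_meas a b hT
  have := h.comp (measurable_swap (α := ℝ) (β := ℝ))
  exact this

lemma ker_pos {a b : ℝ} (ha : 0 < a) {T : Set ℝ} {x y : ℝ} (hy : y ∈ T) (k : Fin 3)
    (h : |a * y + (1 / 2 + a / 2 - b) * (((k : ℕ) : ℝ) - 1) - x| < (1 - 3 * a - 2 * b) / 2) :
    0 < larssonKernel a b T x y := by
  unfold larssonKernel
  rw [Set.indicator_of_mem hy, mul_one]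
  have h1 := fun z => tri_nonneg (t := (1 - 3 * a - 2 * b) / 2) z
  have e1 := mul_nonneg ha.le (h1 (a * y + 1 / 2 + a / 2 - b - x))
  have e2 := mul_nonneg (by linarith : 0 ≤ 2 * a) (h1 (a * y - x))
  have e3 := mul_nonneg ha.le (h1 (a * y - 1 / 2 - a / 2 + b - x))
  have hp := tri_pos h
  fin_cases k
  · have : a * y + (1 / 2 + a / 2 - b) * (((0 : ℕ) : ℝ) - 1) - x
        = a * y - 1 / 2 - a / 2 + b - x := by push_cast; ring
    simp only [this] at hp
    have := mul_pos ha hp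
    linarith
  · have : a * y + (1 / 2 + a / 2 - b) * (((1 : ℕ) : ℝ) - 1) - x
        = a * y - x := by push_cast; ring
    simp only [this] at hp
    have := mul_pos (by linarith : 0 < 2 * a) hp
    linarith
  · have : a * y + (1 / 2 + a / 2 - b) * (((2 : ℕ) : ℝ) - 1) - x
        = a * y + 1 / 2 + a / 2 - b - x := by push_cast; ring
    simp only [this] at hp
    have := mul_pos ha hp
    linarith

/-- basic regularity of the iterates -/
lemma iter_reg {a b : ℝ} (ha : 0 < a) (ht : 0 < (1 - 3 * a - 2 * b) / 2) {T : Set ℝ}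
    (hT : MeasurableSet T) (hf : volume T ≠ ⊤) (n : ℕ) (x : ℝ) :
    Measurable (larssonKernelIter a b T n x) ∧ (∀ y, 0 ≤ larssonKernelIter a b T n x y) ∧
      ∃ C, 0 ≤ C ∧ ∀ y, larssonKernelIter a b T n x y ≤ C := by
  obtain ⟨M, hM0, hM⟩ := ker_le (b := b) ha ht T
  induction n with
  | zero =>
    refine ⟨?_, fun y => ker_nonneg ha T x y, M, hM0, fun y => hM x y⟩
    exact ker_meas_right a b hT x
  | succ n ih =>
    obtain ⟨h1, h2, C, hC0, hC⟩ := ih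
    refine ⟨?_, ?_, ?_⟩
    · have : Measurable (fun p : ℝ × ℝ =>
          larssonKernelIter a b T n x p.2 * larssonKernel a b T p.2 p.1) :=
        (h1.comp measurable_snd).mul (ker_meas_swap a b hT)
      exact (this.stronglyMeasurable.integral_prod_right (ν := volume.restrict T)).measurable
    · intro y
      exact integral_nonneg fun z => mul_nonneg (h2 z) (ker_nonneg ha T z y)
    · refine ⟨C * M * volume.real T, by positivity, fun y => ?_⟩
      have := norm_setIntegral_le_of_norm_le_const (μ := volume) (s := T) (C := C * M)
        (f := fun z => larssonKernelIter a b T n x z * larssonKernel a b T z y)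
        (lt_top_iff_ne_top.2 hf) (fun z _ => by
          rw [Real.norm_of_nonneg (mul_nonneg (h2 z) (ker_nonneg ha T z y))]
          exact mul_le_mul (hC z) (hM z y) (ker_nonneg ha T z y) hC0)
      exact (le_abs_self _).trans this

lemma exists_sub {T : Set ℝ} {len κ y : ℝ} (hκ : 0 < κ) (hk : κ ≤ len / 2)
    (h : ∃ v, y ∈ Set.Icc v (v + len) ∧ Set.Icc v (v + len) ⊆ T) :
    ∃ u, ∀ z ∈ Set.Ioo u (u + κ), z ∈ T ∧ |z - y| < κ := by
  obtain ⟨v, ⟨h1, h2⟩, h3⟩ := h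
  by_cases hc : y ≤ v + len / 2
  · refine ⟨y, fun z hz => ⟨h3 ⟨by linarith [hz.1], by linarith [hz.2]⟩, ?_⟩⟩
    rw [abs_lt]; constructor <;> linarith [hz.1, hz.2]
  · refine ⟨y - κ, fun z hz => ⟨h3 ⟨by linarith [hz.1], by linarith [hz.2]⟩, ?_⟩⟩
    rw [abs_lt]; constructor <;> linarith [hz.1, hz.2]

lemma iter_pos {a b : ℝ} (ha : 0 < a) (ha1 : a < 1) {T : Set ℝ} {t' len : ℝ}
    (ht' : 0 ≤ t') (htt : t' < (1 - 3 * a - 2 * b) / 2)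
    (hT : MeasurableSet T) (hf : volume T ≠ ⊤) (hlen : 0 < len)
    (hI : ∀ y ∈ T, ∃ v, y ∈ Set.Icc v (v + len) ∧ Set.Icc v (v + len) ⊆ T)
    (h1 : ∀ x ∈ T, ∃ y ∈ T, ∃ k : Fin 3,
      |a * y + (1 / 2 + a / 2 - b) * (((k : ℕ) : ℝ) - 1) - x| ≤ t')
    (h2 : ∀ y ∈ T, ∀ k : Fin 3, ∀ u, |u| ≤ t' →
      a * y + (1 / 2 + a / 2 - b) * (((k : ℕ) : ℝ) - 1) + u ∈ T)
    (n : ℕ) (x : ℝ) (hx : x ∈ T) :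
    ∃ y' ∈ T, ∀ y ∈ T, a ^ (n + 1) * |y - y'| < (1 - 3 * a - 2 * b) / 2 - t' →
      0 < larssonKernelIter a b T n x y := by
  have ht : 0 < (1 - 3 * a - 2 * b) / 2 := by linarith
  induction n with
  | zero =>
    obtain ⟨y', hy', k, hk⟩ := h1 x hx
    refine ⟨y', hy', fun y hy hd => ?_⟩
    refine ker_pos ha hy k ?_
    have e : a * y + (1 / 2 + a / 2 - b) * (((k : ℕ) : ℝ) - 1) - x
      = a * (y - y') + (a * y' + (1 / 2 + a / 2 - b) * (((k : ℕ) : ℝ) - 1) - x) := by ring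
    rw [e]
    refine (abs_add_le _ _).trans_lt ?_
    rw [abs_mul, abs_of_pos ha]
    simp only [zero_add, pow_one] at hd
    linarith
  | succ n ih =>
    obtain ⟨w, hw, hwp⟩ := ih
    obtain ⟨y', hy', k, hk⟩ := h1 w hw
    refine ⟨y', hy', fun y hy hd => ?_⟩
    obtain ⟨r1, r2, C, hC0, hC⟩ := iter_reg ha ht hT hf n x
    obtain ⟨M, hM0, hM⟩ := ker_le (b := b) ha ht T
    set s := (1 / 2 + a / 2 - b) * (((k : ℕ) : ℝ) - 1) with hs
    set δ := (1 - 3 * a - 2 * b) / 2 - t' with hδ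
    set z0 := a * y + s + (w - (a * y' + s)) with hz0
    have hk' : |w - (a * y' + s)| ≤ t' := by rw [abs_sub_comm]; exact hk
    have hz0T : z0 ∈ T := h2 y hy k _ hk'
    have hzw : |z0 - w| = a * |y - y'| := by
      have : z0 - w = a * (y - y') := by rw [hz0]; ring
      rw [this, abs_mul, abs_of_pos ha]
    have hgap : 0 < δ - a ^ (n + 1) * |z0 - w| := by
      rw [hzw, ← mul_assoc, ← pow_succ]; linarith
    set κ := min (len / 2) (δ - a ^ (n + 1) * |z0 - w|) with hκ
    have hκ0 : 0 < κ := lt_min (by linarith) hgap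
    have hκ2 : κ ≤ δ - a ^ (n + 1) * |z0 - w| := min_le_right _ _
    have hpn : a ^ (n + 1) ≤ 1 := pow_le_one₀ ha.le ha1.le
    have hpn0 : 0 < a ^ (n + 1) := by positivity
    obtain ⟨u, hu⟩ := exists_sub hκ0 (min_le_left _ _) (hI z0 hz0T)
    have hmeas : Measurable
        (fun z => larssonKernelIter a b T n x z * larssonKernel a b T z y) :=
      r1.mul (ker_meas_left a b hT y)
    have hint : IntegrableOn
        (fun z => larssonKernelIter a b T n x z * larssonKernel a b T z y) T := by
      refine Measure.integrableOn_of_bounded (M := C * M) hf hmeas.aestronglyMeasurable ?_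
      refine Filter.Eventually.of_forall fun z => ?_
      rw [Real.norm_of_nonneg (mul_nonneg (r2 z) (ker_nonneg ha T z y))]
      exact mul_le_mul (hC z) (hM z y) (ker_nonneg ha T z y) hC0
    change 0 < ∫ z in T, larssonKernelIter a b T n x z * larssonKernel a b T z y
    rw [setIntegral_pos_iff_support_of_nonneg_ae
      (Filter.Eventually.of_forall fun z => mul_nonneg (r2 z) (ker_nonneg ha T z y)) hint]
    have hsub : Set.Ioo u (u + κ) ⊆ Function.support
        (fun z => larssonKernelIter a b T n x z * larssonKernel a b T z y) ∩ T := by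
      intro z hz
      obtain ⟨hzT, hzd⟩ := hu z hz
      refine ⟨ne_of_gt (mul_pos (hwp z hzT ?_) (ker_pos ha hy k ?_)), hzT⟩
      · have e1 : |z - w| ≤ |z - z0| + |z0 - w| := abs_sub_le _ _ _
        have e2 : a ^ (n + 1) * |z - w| ≤ a ^ (n + 1) * (|z - z0| + |z0 - w|) := by gcongr
        have e3 : a ^ (n + 1) * |z - z0| ≤ |z - z0| :=
          mul_le_of_le_one_left (abs_nonneg _) hpn
        linarith
      · have e : a * y + s - z = -(w - (a * y' + s)) + -(z - z0) := by rw [hz0]; ring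
        rw [← hs, e]
        refine (abs_add_le _ _).trans_lt ?_
        rw [abs_neg, abs_neg]
        have : 0 ≤ a ^ (n + 1) * |z0 - w| := by positivity
        linarith
    refine lt_of_lt_of_le ?_ (measure_mono hsub)
    rw [Real.volume_Ioo]
    simpa using hκ0

/-- centres -/
noncomputable def cen (a d : ℝ) (l : ℕ) (σ : Fin l → Fin 3) : ℝ :=
  ∑ i : Fin l, a ^ (i : ℕ) * (d * (((σ i : ℕ) : ℝ) - 1))

lemma cen_succ (a d : ℝ) (l : ℕ) (σ : Fin (l + 1) → Fin 3) :
    cen a d (l + 1) σ = d * (((σ 0 : ℕ) : ℝ) - 1) + a * cen a d l (fun i => σ i.succ) := by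
  unfold cen
  rw [Fin.sum_univ_succ, Finset.mul_sum]
  simp only [Fin.val_zero, pow_zero, one_mul, Fin.val_succ, pow_succ]
  congr 1
  refine Finset.sum_congr rfl fun i _ => by ring

lemma cen_last (a d : ℝ) (l : ℕ) (σ : Fin (l + 1) → Fin 3) :
    cen a d (l + 1) σ = cen a d l (fun i => σ i.castSucc)
      + a ^ l * (d * (((σ (Fin.last l) : ℕ) : ℝ) - 1)) := by
  unfold cen
  rw [Fin.sum_univ_castSucc]
  simp

lemma k_bd (k : Fin 3) : |((k : ℕ) : ℝ) - 1| ≤ 1 := by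
  fin_cases k <;> norm_num

lemma cen_bd {a d : ℝ} (ha : 0 < a) (ha1 : a < 1) (hd : 0 < d) (l : ℕ) (σ : Fin l → Fin 3) :
    |cen a d l σ| * (1 - a) ≤ d * (1 - a ^ l) := by
  induction l with
  | zero => simp [cen]
  | succ l ih =>
    rw [cen_last]
    have h1 := ih (fun i => σ i.castSucc)
    have h2 := abs_add_le (cen a d l (fun i => σ i.castSucc))
      (a ^ l * (d * (((σ (Fin.last l) : ℕ) : ℝ) - 1)))
    have h3 : |a ^ l * (d * (((σ (Fin.last l) : ℕ) : ℝ) - 1))| ≤ a ^ l * d := by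
      rw [abs_mul, abs_mul, abs_of_pos hd, abs_of_pos (by positivity : 0 < a ^ l)]
      have := k_bd (σ (Fin.last l))
      have hp : 0 < a ^ l * d := by positivity
      nlinarith
    have h4 := mul_le_mul_of_nonneg_right (h2.trans (add_le_add_right h3 _))
      (by linarith : 0 ≤ 1 - a)
    refine h4.trans ?_
    rw [pow_succ]
    linarith

lemma cen_inj {a d : ℝ} (ha : 0 < a) (ha3 : 3 * a < 1) (hd : 0 < d) (l : ℕ)
    (σ τ : Fin l → Fin 3) (h : |cen a d l σ - cen a d l τ| ≤ 3 * (a ^ l * d)) : σ = τ := by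
  induction l with
  | zero => exact Subsingleton.elim _ _
  | succ l ih =>
    have hp : 0 < a ^ l * d := by positivity
    rw [cen_last a d l σ, cen_last a d l τ] at h
    have hq : 3 * (a ^ (l + 1) * d) < a ^ l * d := by
      rw [pow_succ]; nlinarith
    set k := σ (Fin.last l) with hk
    set j := τ (Fin.last l) with hj
    have hkj : |(((k : ℕ) : ℝ) - ((j : ℕ) : ℝ))| ≤ 2 := by
      have := k_bd k
      have := k_bd j
      rw [abs_le] at *
      constructor <;> linarith
    have hi : (fun i : Fin l => σ i.castSucc) = (fun i => τ i.castSucc) := by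
      apply ih
      rw [abs_le] at h hkj ⊢
      constructor <;> nlinarith
    have hl : k = j := by
      rw [hi] at h
      have e : cen a d l (fun i => τ i.castSucc) + a ^ l * (d * (((k : ℕ) : ℝ) - 1))
        - (cen a d l (fun i => τ i.castSucc) + a ^ l * (d * (((j : ℕ) : ℝ) - 1)))
        = (a ^ l * d) * (((k : ℕ) : ℝ) - ((j : ℕ) : ℝ)) := by ring
      rw [e, abs_mul, abs_of_pos hp] at h
      have h1 : |((k : ℕ) : ℝ) - ((j : ℕ) : ℝ)| < 1 := by
        by_contra hc
        push Not at hc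
        nlinarith
      have h2 : |((k : ℕ) : ℤ) - ((j : ℕ) : ℤ)| < 1 := by exact_mod_cast h1
      rw [Int.abs_lt_one_iff] at h2
      exact Fin.ext (by omega)
    funext i
    refine Fin.lastCases hl (fun i => congrFun hi i) i

/-- nearest third -/
lemma exists_k {q e : ℝ} (h : |e| ≤ 3 * q / 2) :
    ∃ k : Fin 3, |e - q * (((k : ℕ) : ℝ) - 1)| ≤ q / 2 := by
  rw [abs_le] at h
  by_cases h1 : e < -q / 2
  · exact ⟨0, by rw [abs_le]; constructor <;> norm_num <;> linarith [h.1]⟩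
  by_cases h2 : e ≤ q / 2
  · exact ⟨1, by rw [abs_le]; constructor <;> norm_num <;> linarith⟩
  · exact ⟨2, by rw [abs_le]; constructor <;> norm_num <;> linarith [h.2]⟩

end LK

open LK in
/-- (General case)  There exist `l ∈ ℕ` and a closed set `T ⊂ (−1+c, 1−c)` which is the
union of `3^l` pairwise disjoint closed intervals of equal (positive) length, with `0` in
the interior of `T`, together with `κ > 0` such that for every `x ∈ T` the set
`{y : m_T(x,y) > 0}` contains an interval of length `κ`, and moreover an `n` such that
`m_T^{(n)} > 0` on `T × T`.  (Recall `larssonKernelIter a b T n = m_T^{(n+1)}`.) -/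
theorem exists_type_space_positive_iterate_general_case
    (a b : ℝ) (ha : 1 / 4 < a) (hb : 0 < b) (hab : 3 * a + 2 * b < 1)
    (c : ℝ) (hc : c = 2 * b / (1 - a)) :
    ∃ (l : ℕ) (T : Set ℝ) (α : Fin (3 ^ l) → ℝ) (len : ℝ),
      0 < len ∧
      T = ⋃ i : Fin (3 ^ l), Set.Icc (α i) (α i + len) ∧
      (∀ i j : Fin (3 ^ l), i ≠ j →
        Disjoint (Set.Icc (α i) (α i + len)) (Set.Icc (α j) (α j + len))) ∧
      IsClosed T ∧
      T ⊆ Set.Ioo (-1 + c) (1 - c) ∧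
      0 ∈ interior T ∧
      (∃ κ > (0 : ℝ), ∀ x ∈ T, ∃ u : ℝ,
        Set.Ioo u (u + κ) ⊆ {y : ℝ | 0 < larssonKernel a b T x y}) ∧
      (∃ n : ℕ, ∀ x ∈ T, ∀ y ∈ T, 0 < larssonKernelIter a b T n x y) := by
  have ha0 : 0 < a := by linarith
  have ha3 : 3 * a < 1 := by linarith
  have ha1 : a < 1 := by linarith
  set d := 1 / 2 + a / 2 - b with hd
  have hd0 : 0 < d := by linarith
  have ht : 0 < (1 - 3 * a - 2 * b) / 2 := by linarith
  obtain ⟨l, hl⟩ := exists_pow_lt_of_lt_one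
    (show 0 < (1 - 3 * a - 2 * b) / 2 / (d * (1 - 3 * a) / 2) from
      div_pos ht (by have := mul_pos hd0 (by linarith : 0 < 1 - 3 * a); linarith)) ha1
  rw [lt_div_iff₀ (by have := mul_pos hd0 (by linarith : 0 < 1 - 3 * a); linarith)] at hl
  set q := a ^ l * d with hq
  have hq0 : 0 < q := by positivity
  set t' := q * (1 - 3 * a) / 2 with ht'
  have ht'0 : 0 < t' := by
    have := mul_pos hq0 (by linarith : 0 < 1 - 3 * a)
    linarith
  have htt : t' < (1 - 3 * a - 2 * b) / 2 := by
    refine lt_of_eq_of_lt ?_ hl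
    rw [ht', hq]; ring
  let E : Fin (3 ^ l) ≃ (Fin l → Fin 3) := finFunctionFinEquiv.symm
  let α : Fin (3 ^ l) → ℝ := fun i => cen a d l (E i) - 3 * q / 2
  let T : Set ℝ := ⋃ i : Fin (3 ^ l), Set.Icc (α i) (α i + 3 * q)
  have memT : ∀ x, x ∈ T ↔ ∃ σ, |x - cen a d l σ| ≤ 3 * q / 2 := by
    intro x
    simp only [T, Set.mem_iUnion, Set.mem_Icc, α]
    constructor
    · rintro ⟨i, h1, h2⟩
      exact ⟨E i, by rw [abs_le]; constructor <;> linarith⟩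
    · rintro ⟨σ, h⟩
      refine ⟨E.symm σ, ?_⟩
      rw [abs_le] at h
      rw [E.apply_symm_apply]
      constructor <;> linarith [h.1, h.2]
  have hclosed : IsClosed T := isClosed_iUnion_of_finite fun i => isClosed_Icc
  have hcomp : IsCompact T := isCompact_iUnion fun i => isCompact_Icc
  have hbd : ∀ x ∈ T, |x| < 1 - c := by
    intro x hx
    obtain ⟨σ, h⟩ := (memT x).1 hx
    have h1 := cen_bd ha0 ha1 hd0 l σ
    have h2 : |x| ≤ |x - cen a d l σ| + |cen a d l σ| := by
      have := abs_add_le (x - cen a d l σ) (cen a d l σ)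
      rwa [sub_add_cancel] at this
    have h3 : |x| * (1 - a) < (1 - c) * (1 - a) := by
      have e : (1 - c) * (1 - a) = d + (1 - 3 * a - 2 * b) / 2 := by
        rw [hc, hd]
        have : (1 - a) ≠ 0 := by linarith
        field_simp
        ring
      rw [e]
      have h4 : |x| * (1 - a) ≤ (3 * q / 2 + |cen a d l σ|) * (1 - a) :=
        mul_le_mul_of_nonneg_right (by linarith) (by linarith)
      have h5 : d * (1 - a ^ l) = d - q := by rw [hq]; ring
      rw [h5] at h1
      rw [ht'] at htt
      nlinarith
    exact lt_of_mul_lt_mul_right h3 (by linarith)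
  have hI : ∀ y ∈ T, ∃ v, y ∈ Set.Icc v (v + 3 * q) ∧ Set.Icc v (v + 3 * q) ⊆ T := by
    intro y hy
    obtain ⟨i, hi⟩ := Set.mem_iUnion.1 hy
    exact ⟨α i, hi, Set.subset_iUnion (fun i => Set.Icc (α i) (α i + 3 * q)) i⟩
  have h1 : ∀ x ∈ T, ∃ y ∈ T, ∃ k : Fin 3,
      |a * y + (1 / 2 + a / 2 - b) * (((k : ℕ) : ℝ) - 1) - x| ≤ t' := by
    intro x hx
    obtain ⟨σ, h⟩ := (memT x).1 hx
    obtain ⟨k, hk⟩ := exists_k h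
    let τ : Fin (l + 1) → Fin 3 := Fin.snoc σ k
    have e1 := cen_last a d l τ
    have e2 := cen_succ a d l τ
    have e3 : (fun i : Fin l => τ i.castSucc) = σ := by
      funext i; exact Fin.snoc_castSucc (α := fun _ => Fin 3) k σ i
    have e4 : τ (Fin.last l) = k := Fin.snoc_last (α := fun _ => Fin 3) k σ
    rw [e3, e4] at e1
    set e := x - cen a d l σ - q * (((k : ℕ) : ℝ) - 1) with he
    refine ⟨cen a d l (fun i => τ i.succ) + 3 * e, (memT _).2 ⟨fun i => τ i.succ, ?_⟩, τ 0, ?_⟩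
    · rw [add_sub_cancel_left, abs_mul, abs_of_pos (by norm_num : (0 : ℝ) < 3)]
      linarith
    · rw [← hd]
      have : a * (cen a d l (fun i => τ i.succ) + 3 * e) + d * (((τ 0 : ℕ) : ℝ) - 1) - x
          = - ((1 - 3 * a) * e) := by
        have e5 : a * cen a d l (fun i => τ i.succ) + d * (((τ 0 : ℕ) : ℝ) - 1)
          = cen a d l σ + q * (((k : ℕ) : ℝ) - 1) := by
          rw [hq]; linarith
        have : x = e + (cen a d l σ + q * (((k : ℕ) : ℝ) - 1)) := by rw [he]; ring
        rw [this, ← e5]; ring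
      rw [this, abs_neg, abs_mul, abs_of_pos (by linarith : 0 < 1 - 3 * a), ht']
      nlinarith
  have h2 : ∀ y ∈ T, ∀ k : Fin 3, ∀ u, |u| ≤ t' →
      a * y + (1 / 2 + a / 2 - b) * (((k : ℕ) : ℝ) - 1) + u ∈ T := by
    intro y hy k u hu
    obtain ⟨σ, h⟩ := (memT y).1 hy
    rw [← hd]
    let τ : Fin (l + 1) → Fin 3 := Fin.cons k σ
    have e1 := cen_last a d l τ
    have e2 := cen_succ a d l τ
    have e3 : (fun i : Fin l => τ i.succ) = σ := by
      funext i; exact Fin.cons_succ (α := fun _ => Fin 3) k σ i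
    have e4 : τ 0 = k := Fin.cons_zero (α := fun _ => Fin 3) k σ
    rw [e3, e4] at e2
    refine (memT _).2 ⟨fun i => τ i.castSucc, ?_⟩
    have e5 : a * y + d * (((k : ℕ) : ℝ) - 1) + u - cen a d l (fun i => τ i.castSucc)
        = a * (y - cen a d l σ) + q * (((τ (Fin.last l) : ℕ) : ℝ) - 1) + u := by
      rw [hq]; linarith
    rw [e5]
    have b1 := abs_add_three (a * (y - cen a d l σ)) (q * (((τ (Fin.last l) : ℕ) : ℝ) - 1)) u
    rw [abs_mul, abs_mul, abs_of_pos ha0, abs_of_pos hq0] at b1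
    have b2 := mul_le_mul_of_nonneg_left (k_bd (τ (Fin.last l))) hq0.le
    have b3 := mul_le_mul_of_nonneg_left h ha0.le
    rw [ht'] at hu
    linarith
  refine ⟨l, T, α, 3 * q, by linarith, rfl, ?_, hclosed, ?_, ?_, ?_, ?_⟩
  · intro i j hij
    rw [Set.disjoint_left]
    intro x hx hy
    apply hij
    apply E.injective
    apply cen_inj ha0 ha3 hd0 l
    simp only [Set.mem_Icc, α] at hx hy
    rw [abs_le]
    constructor <;> linarith [hx.1, hx.2, hy.1, hy.2]
  · intro x hx
    have := abs_lt.1 (hbd x hx)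
    exact ⟨by linarith [this.1], this.2⟩
  · rw [mem_interior]
    refine ⟨Set.Ioo (-(3 * q / 2)) (3 * q / 2), fun x hx => ?_, isOpen_Ioo, by
      constructor <;> linarith⟩
    refine (memT x).2 ⟨fun _ => 1, ?_⟩
    have : cen a d l (fun _ => 1) = 0 := by simp [cen]
    rw [this, sub_zero, abs_le]
    exact ⟨hx.1.le, hx.2.le⟩
  · set κ := min (3 * q / 2) ((1 - 3 * a - 2 * b) / 2 - t') with hκ
    have hκ0 : 0 < κ := lt_min (by linarith) (by linarith)
    have hκ2 : κ ≤ (1 - 3 * a - 2 * b) / 2 - t' := min_le_right _ _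
    refine ⟨κ, hκ0, fun x hx => ?_⟩
    obtain ⟨y0, hy0, k, hk⟩ := h1 x hx
    obtain ⟨u, hu⟩ := exists_sub hκ0 (min_le_left _ _) (hI y0 hy0)
    refine ⟨u, fun y hy => ?_⟩
    obtain ⟨hyT, hyd⟩ := hu y hy
    refine ker_pos ha0 hyT k ?_
    have e : a * y + (1 / 2 + a / 2 - b) * (((k : ℕ) : ℝ) - 1) - x
      = a * (y - y0) + (a * y0 + (1 / 2 + a / 2 - b) * (((k : ℕ) : ℝ) - 1) - x) := by ring
    rw [e]
    refine (abs_add_le _ _).trans_lt ?_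
    rw [abs_mul, abs_of_pos ha0]
    have : a * |y - y0| ≤ |y - y0| := mul_le_of_le_one_left (abs_nonneg _) ha1.le
    linarith
  · obtain ⟨n, hn⟩ := exists_pow_lt_of_lt_one
      (show 0 < ((1 - 3 * a - 2 * b) / 2 - t') / 2 by linarith) ha1
    refine ⟨n, fun x hx y hy => ?_⟩
    obtain ⟨y', hy', hp⟩ := iter_pos ha0 ha1 ht'0.le htt hclosed.measurableSet
      hcomp.measure_lt_top.ne (by linarith : 0 < 3 * q) hI h1 h2 n x hx
    refine hp y hy ?_
    have c0 : 0 < c := by rw [hc]; exact div_pos (by linarith) (by linarith)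
    have g1 := abs_lt.1 (hbd y hy)
    have g2 := abs_lt.1 (hbd y' hy')
    have g3 : |y - y'| ≤ 2 := by
      rw [abs_le]; constructor <;> linarith [g1.1, g1.2, g2.1, g2.2]
    have g4 : a ^ (n + 1) ≤ a ^ n := pow_le_pow_of_le_one ha0.le ha1.le (Nat.le_succ n)
    have g5 : a ^ (n + 1) * |y - y'| ≤ a ^ n * 2 :=
      mul_le_mul g4 g3 (abs_nonneg _) (by positivity)
    linarith
end
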